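/- arXiv:1603.04277 — 2 statements merged into one kernel-verified Lean document; each statement's English description precedes it below -/
import Mathlib

section
/- Let α : ℝ^n → ℝ be locally log-Hölder continuous and let 0 < q < ∞. Then there exists a constant c > 0 such that for every complex sequence λ = {λ_{v,m}}_{v∈ℕ₀,m∈ℤ^n} with ‖λ‖_{f^{α(·)}_{∞,q}} < ∞, there exists a collection {E_{v,m}}_{v∈ℕ₀,m∈ℤ^n} of measurable sets with E_{v,m} ⊂ Q_{v,m}, |E_{v,m}| > |Q_{v,m}|/2 for all v, m, and ‖ (∑_{v=0}^∞ ∑_{m∈ℤ^n} 2^{v(α(·)+n/2)q} |λ_{v,m}|^q χ_{E_{v,m}})^{1/q} ‖_{L^∞} ≤ c ‖λ‖_{f^{α(·)}_{∞,q}}. -/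
open MeasureTheory ENNReal Real Set

noncomputable section

/-- Euclidean space ℝ^n. -/
abbrev En (n : ℕ) := EuclideanSpace ℝ (Fin n)

/-- `g` is locally log-Hölder continuous with constant `c`. -/
def LocLogHolder {n : ℕ} (c : ℝ) (g : En n → ℝ) : Prop :=
  0 < c ∧ ∀ x y : En n, |g x - g y| ≤ c / Real.log (Real.exp 1 + 1 / ‖x - y‖)

/-- `g` is globally log-Hölder continuous with local constant `c`. -/
def GlobLogHolder {n : ℕ} (c : ℝ) (g : En n → ℝ) : Prop :=
  LocLogHolder c g ∧
    ∃ (gi cd : ℝ), 0 < cd ∧ ∀ x : En n, |g x - gi| ≤ cd / Real.log (Real.exp 1 + ‖x‖)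

/-- The kernel η_{v,h}(x) = 2^{nv} (1 + 2^v |x|)^{-h}. -/
def eta (n : ℕ) (v : ℕ) (h : ℝ) (x : En n) : ℝ :=
  (2 : ℝ) ^ (n * v) * (1 + (2 : ℝ) ^ v * ‖x‖) ^ (-h)

/-- The dyadic cube Q_{v,m}. -/
def dyadicCube (n : ℕ) (v : ℤ) (m : Fin n → ℤ) : Set (En n) :=
  {x | ∀ i, (m i : ℝ) ≤ (2 : ℝ) ^ v * x i ∧ (2 : ℝ) ^ v * x i < m i + 1}

/-- Luxemburg (quasi-)norm of an ℝ≥0∞-valued function with variable exponent `p`. -/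
def luxNorm {n : ℕ} (p : En n → ℝ) (F : En n → ℝ≥0∞) : ℝ≥0∞ :=
  sInf {c : ℝ≥0∞ | 0 < c ∧ ∫⁻ x, (F x / c) ^ p x ≤ 1}

/-- The mixed Lebesgue-sequence space norm ‖(F_v)_v‖_{L^{p(·)}(ℓ_{q(·)})}. -/
def mixedNorm {n : ℕ} (p q : En n → ℝ) (F : ℕ → En n → ℝ≥0∞) : ℝ≥0∞ :=
  luxNorm p fun x => (∑' v : ℕ, F v x ^ q x) ^ (1 / q x)

/-- The sequence space norm ‖λ‖_{f^{α(·)}_{p(·),q(·)}}. -/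
def seqNorm {n : ℕ} (α p q : En n → ℝ) (lam : ℕ → (Fin n → ℤ) → ℂ) : ℝ≥0∞ :=
  mixedNorm p q fun v x =>
    ∑' m : Fin n → ℤ,
      ENNReal.ofReal ((2 : ℝ) ^ ((v : ℝ) * (α x + n / 2)) * ‖lam v m‖) *
        (dyadicCube n (v : ℤ) m).indicator (fun _ => (1 : ℝ≥0∞)) x

/-- The sequence space norm ‖λ‖_{f^{α(·)}_{∞,q}}. -/
def seqNormInf {n : ℕ} (α : En n → ℝ) (q : ℝ) (lam : ℕ → (Fin n → ℤ) → ℂ) : ℝ≥0∞ :=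
  ⨆ (vQ : ℤ) (mQ : Fin n → ℤ),
    volume (dyadicCube n vQ mQ) ^ (-(1 / q)) *
      (∑' v : ℕ, if vQ ≤ (v : ℤ) then
          ∫⁻ x in dyadicCube n vQ mQ,
            ∑' m : Fin n → ℤ,
              ENNReal.ofReal ((2 : ℝ) ^ ((v : ℝ) * (α x + n / 2) * q) * ‖lam v m‖ ^ q) *
                (dyadicCube n (v : ℤ) m).indicator (fun _ => (1 : ℝ≥0∞)) x
        else 0) ^ (1 / q)

/-- The Calderón product (quasi-)norm associated to two sequence space norms. -/
def calderonNorm {n : ℕ} (N0 N1 : (ℕ → (Fin n → ℤ) → ℂ) → ℝ≥0∞) (θ : ℝ)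
    (lam : ℕ → (Fin n → ℤ) → ℂ) : ℝ≥0∞ :=
  sInf {M : ℝ≥0∞ | ∃ μ ν : ℕ → (Fin n → ℤ) → ℂ, N0 μ ≤ 1 ∧ N1 ν ≤ 1 ∧
    ∀ v m, ENNReal.ofReal ‖lam v m‖ ≤
      M * ENNReal.ofReal ‖μ v m‖ ^ (1 - θ) * ENNReal.ofReal ‖ν v m‖ ^ θ}

theorem cube_meas (n : ℕ) (v : ℤ) (m : Fin n → ℤ) : MeasurableSet (dyadicCube n v m) := by
  unfold dyadicCube
  simp only [setOf_forall]
  refine MeasurableSet.iInter fun i => ?_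
  have h : Measurable fun x : En n => (2 : ℝ) ^ v * x i := by fun_prop
  exact (measurableSet_le measurable_const h).inter (measurableSet_lt h measurable_const)

theorem cube_vol (n : ℕ) (v : ℤ) (m : Fin n → ℤ) :
    volume (dyadicCube n v m) ≠ 0 ∧ volume (dyadicCube n v m) ≠ ∞ := by
  have h2 : (0 : ℝ) < 2 ^ v := by positivity
  have hE : dyadicCube n v m = (WithLp.ofLp) ⁻¹'
      (Set.pi univ fun i => Ico ((m i : ℝ) / 2 ^ v) ((m i + 1 : ℝ) / 2 ^ v)) := by
    ext x
    simp only [dyadicCube, mem_setOf_eq, mem_preimage, Set.mem_pi, mem_univ, true_imp_iff, mem_Ico]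
    refine forall_congr' fun i => ?_
    rw [div_le_iff₀ h2, lt_div_iff₀ h2, mul_comm]
  rw [hE, (PiLp.volume_preserving_ofLp (Fin n)).measure_preimage
    (MeasurableSet.univ_pi fun i => measurableSet_Ico).nullMeasurableSet, Real.volume_pi_Ico]
  constructor
  · rw [Finset.prod_ne_zero_iff]
    intro i _
    have : (m i : ℝ) / 2 ^ v < (m i + 1 : ℝ) / 2 ^ v := by gcongr; linarith
    simpa using this
  · exact ENNReal.prod_ne_top fun i _ => ENNReal.ofReal_ne_top

theorem holder_cont {n : ℕ} {c : ℝ} {α : En n → ℝ} (h : LocLogHolder c α) : Continuous α := by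
  obtain ⟨hc, h⟩ := h
  rw [Metric.continuous_iff]
  intro b ε hε
  refine ⟨Real.exp (-(c / ε + 1)), Real.exp_pos _, fun a ha => ?_⟩
  rw [dist_eq_norm] at ha ⊢
  rcases eq_or_ne a b with rfl | hab
  · simpa using hε
  have hn : 0 < ‖a - b‖ := norm_pos_iff.2 (sub_ne_zero.2 hab)
  have hlog : c / ε < Real.log (Real.exp 1 + 1 / ‖a - b‖) := by
    rw [Real.lt_log_iff_exp_lt (by positivity)]
    have h1 : Real.exp (c / ε + 1) < 1 / ‖a - b‖ := by
      rw [lt_one_div (Real.exp_pos _) hn, one_div, ← Real.exp_neg]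
      exact ha
    have h2 : Real.exp (c / ε) < Real.exp (c / ε + 1) := Real.exp_lt_exp.2 (by linarith)
    have := Real.exp_pos 1
    linarith
  have hpos : 0 < c / ε := by positivity
  rw [Real.norm_eq_abs]
  refine (h a b).trans_lt ?_
  rw [div_lt_iff₀ (hpos.trans hlog)]
  rw [div_lt_iff₀ hε] at hlog
  linarith

theorem cheb {X : Type*} [MeasurableSpace X] (μ : Measure X) (Q : Set X) (hQ : MeasurableSet Q)
    (h0 : μ Q ≠ 0) (h1 : μ Q ≠ ∞) (S : X → ℝ≥0∞) (hS : Measurable S) (M : ℝ≥0∞) (hM : M ≠ ∞)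
    (h : ∫⁻ x in Q, S x ∂μ ≤ M * μ Q) :
    μ Q / 2 < μ (Q ∩ {x | S x ≤ 4 * M}) := by
  have hm : MeasurableSet {x | S x ≤ 4 * M} := measurableSet_le hS measurable_const
  have hbad : 4 * μ (Q \ {x | S x ≤ 4 * M}) ≤ μ Q := by
    rcases eq_or_ne M 0 with rfl | hM0
    · have h3 : ∫⁻ x in Q, S x ∂μ = 0 := by simpa using h
      rw [lintegral_eq_zero_iff hS] at h3
      have h4 : μ (Q \ {x | S x ≤ 4 * 0}) = 0 := by
        have h5 := (ae_restrict_iff' hQ).1 h3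
        refine measure_mono_null ?_ (ae_iff.1 h5)
        intro x hx
        simp only [mul_zero, nonpos_iff_eq_zero, mem_diff, mem_setOf_eq] at hx
        simp only [mem_setOf_eq, Pi.zero_apply]
        exact fun h => hx.2 (h hx.1)
      rw [h4]; simp
    · have h3 := mul_meas_ge_le_lintegral (μ := μ.restrict Q) hS (4 * M)
      have h4 : μ (Q \ {x | S x ≤ 4 * M}) ≤ (μ.restrict Q) {x | 4 * M ≤ S x} := by
        rw [Measure.restrict_apply (measurableSet_le measurable_const hS)]
        refine measure_mono fun x hx => ⟨?_, hx.1⟩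
        exact (not_le.1 (fun h => hx.2 h) : 4 * M < S x).le
      have h5 : M * (4 * μ (Q \ {x | S x ≤ 4 * M})) ≤ M * μ Q := by
        calc _ = 4 * M * μ (Q \ {x | S x ≤ 4 * M}) := by ring
          _ ≤ 4 * M * (μ.restrict Q) {x | 4 * M ≤ S x} := by gcongr
          _ ≤ _ := h3.trans h
      exact (ENNReal.mul_le_mul_iff_right hM0 hM).1 h5
  have hadd := measure_inter_add_diff (μ := μ) Q hm
  have hA : μ (Q ∩ {x | S x ≤ 4 * M}) ≠ ∞ := measure_ne_top_of_subset inter_subset_left h1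
  have hB : μ (Q \ {x | S x ≤ 4 * M}) ≠ ∞ := measure_ne_top_of_subset diff_subset h1
  generalize μ (Q ∩ {x | S x ≤ 4 * M}) = a at *
  generalize μ (Q \ {x | S x ≤ 4 * M}) = b at *
  generalize μ Q = w at *
  lift a to NNReal using hA
  lift b to NNReal using hB
  lift w to NNReal using h1
  rw [ENNReal.div_lt_iff (by simp) (by simp)]
  norm_cast at *
  have h0' : 0 < w := pos_iff_ne_zero.2 h0
  have e1 : (4 : ℝ) * b ≤ w := by exact_mod_cast hbad
  have e2 : (a : ℝ) + b = w := by exact_mod_cast hadd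
  have e3 : (0 : ℝ) < w := by exact_mod_cast h0'
  have : (w : ℝ) < a * 2 := by linarith
  exact_mod_cast this

/-- the other direction of Proposition `prop1`: for any
`λ ∈ f^{α(·)}_{∞,q}` there are subsets `E_{v,m} ⊂ Q_{v,m}` with
`|E_{v,m}| > |Q_{v,m}|/2` so that the `L^∞` norm of the corresponding expression
is controlled by `‖λ‖_{f^{α(·)}_{∞,q}}`. -/
theorem stmt6 {n : ℕ} (α : En n → ℝ) (hα : ∃ c, LocLogHolder c α)
    (q : ℝ) (hq : 0 < q) :
    ∃ c : ℝ, 0 < c ∧ ∀ lam : ℕ → (Fin n → ℤ) → ℂ, seqNormInf α q lam ≠ ∞ →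
      ∃ E : ℕ → (Fin n → ℤ) → Set (En n),
        (∀ (v : ℕ) (m : Fin n → ℤ), MeasurableSet (E v m) ∧ E v m ⊆ dyadicCube n (v : ℤ) m ∧
          volume (dyadicCube n (v : ℤ) m) / 2 < volume (E v m)) ∧
        essSup (fun x =>
            (∑' (v : ℕ) (m : Fin n → ℤ),
              ENNReal.ofReal ((2 : ℝ) ^ ((v : ℝ) * (α x + n / 2) * q) * ‖lam v m‖ ^ q) *
                (E v m).indicator (fun _ => (1 : ℝ≥0∞)) x) ^ (1 / q)) volume ≤
          ENNReal.ofReal c * seqNormInf α q lam := by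
  obtain ⟨c0, hc0⟩ := hα
  have hcont := holder_cont hc0
  refine ⟨(4 : ℝ) ^ (1 / q), by positivity, fun lam hN => ?_⟩
  set N := seqNormInf α q lam with hNdef
  let F : ℕ → En n → ℝ≥0∞ := fun v x => ∑' m : Fin n → ℤ,
              ENNReal.ofReal ((2 : ℝ) ^ ((v : ℝ) * (α x + n / 2) * q) * ‖lam v m‖ ^ q) *
                (dyadicCube n (v : ℤ) m).indicator (fun _ => (1 : ℝ≥0∞)) x
  have hF : ∀ v, Measurable (F v) := by
    intro v
    refine Measurable.ennreal_tsum fun m => ?_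
    refine Measurable.mul ?_ (measurable_const.indicator (cube_meas _ _ _))
    have hm := hcont.measurable
    fun_prop
  let S : ℕ → En n → ℝ≥0∞ := fun k x => ∑' v : ℕ, if k ≤ v then F v x else 0
  have hSm : ∀ k v, Measurable (fun x => if k ≤ v then F v x else 0) := by
    intro k v
    split_ifs
    · exact hF v
    · exact measurable_const
  have hS : ∀ k, Measurable (S k) := fun k => Measurable.ennreal_tsum fun v => hSm k v
  have hNq : N ^ q ≠ ∞ := ENNReal.rpow_ne_top_of_nonneg hq.le hN
  have hint : ∀ (k : ℕ) (m : Fin n → ℤ), ∫⁻ x in dyadicCube n (k : ℤ) m, S k x ≤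
      N ^ q * volume (dyadicCube n (k : ℤ) m) := by
    intro k m
    have h1 : volume (dyadicCube n (k : ℤ) m) ^ (-(1 / q)) *
        (∫⁻ x in dyadicCube n (k : ℤ) m, S k x) ^ (1 / q) ≤ N := by
      have h2 : ∫⁻ x in dyadicCube n (k : ℤ) m, S k x =
          ∑' v : ℕ, if (k : ℤ) ≤ (v : ℤ) then ∫⁻ x in dyadicCube n (k : ℤ) m, F v x else 0 := by
        rw [lintegral_tsum fun v => (hSm k v).aemeasurable]
        refine tsum_congr fun v => ?_
        simp only [Nat.cast_le]
        split_ifs <;> simp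
      rw [h2, hNdef]
      unfold seqNormInf
      exact le_iSup₂ (f := fun (vQ : ℤ) (mQ : Fin n → ℤ) =>
        volume (dyadicCube n vQ mQ) ^ (-(1 / q)) *
          (∑' v : ℕ, if vQ ≤ (v : ℤ) then
            ∫⁻ x in dyadicCube n vQ mQ, F v x else 0) ^ (1 / q)) (k : ℤ) m
    obtain ⟨hv0, hv1⟩ := cube_vol n k m
    have h3 := ENNReal.rpow_le_rpow h1 hq.le
    rw [ENNReal.mul_rpow_of_nonneg _ _ hq.le, ← ENNReal.rpow_mul, ← ENNReal.rpow_mul] at h3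
    have e1 : -(1 / q) * q = -1 := by field_simp
    have e2 : 1 / q * q = 1 := by field_simp
    rw [e1, e2, ENNReal.rpow_one, ENNReal.rpow_neg_one] at h3
    rw [mul_comm, ← div_eq_mul_inv] at h3
    exact (ENNReal.div_le_iff hv0 hv1).1 h3
  refine ⟨fun v m => dyadicCube n (v : ℤ) m ∩ {x | S v x ≤ 4 * N ^ q}, fun v m => ⟨?_, ?_, ?_⟩, ?_⟩
  · exact (cube_meas _ _ _).inter (measurableSet_le (hS v) measurable_const)
  · exact inter_subset_left
  · exact cheb volume _ (cube_meas _ _ _) (cube_vol _ _ _).1 (cube_vol _ _ _).2 (S v) (hS v) _ hNq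
      (hint v m)
  · refine essSup_le_of_ae_le _ (Filter.Eventually.of_forall fun x => ?_)
    have e2 : q * (1 / q) = 1 := by field_simp
    have hc : ENNReal.ofReal ((4 : ℝ) ^ (1 / q)) * N = (4 * N ^ q) ^ (1 / q) := by
      rw [ENNReal.mul_rpow_of_nonneg _ _ (by positivity), ← ENNReal.rpow_mul, e2, ENNReal.rpow_one,
        ← ENNReal.ofReal_rpow_of_pos (by norm_num)]
      norm_num
    rw [hc]
    refine ENNReal.rpow_le_rpow ?_ (by positivity)
    by_cases hex : ∃ v : ℕ, S v x ≤ 4 * N ^ q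
    · classical
      refine le_trans ?_ (Nat.find_spec hex)
      refine ENNReal.tsum_le_tsum fun v => ?_
      split_ifs with hv
      · refine ENNReal.tsum_le_tsum fun m => ?_
        gcongr
        exact inter_subset_left
      · have hnot : ¬ S v x ≤ 4 * N ^ q := Nat.find_min hex (not_le.1 hv)
        simp [hnot]
    · push Not at hex
      simp [fun v => not_le.2 (hex v)]
end
end

section
/- Let 0 < θ < 1, let p₀, p₁ be globally log-Hölder continuous exponents with 1 ≤ p₀⁻ ≤ p₀⁺ < ∞ and 1 ≤ p₁⁻ ≤ p₁⁺ < ∞, and let α₀, α₁ : ℝ^n → ℝ be locally log-Hölder continuous. Define 1/p(·) := (1−θ)/p₀(·) + θ/p₁(·) and α(·) := (1−θ)α₀(·) + θα₁(·). Then the Calderón product (f^{α₀(·)}_{p₀(·),p₀(·)})^{1−θ} · (f^{α₁(·)}_{p₁(·),p₁(·)})^{θ} equals f^{α(·)}_{p(·),p(·)} with equivalent norms. -/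
open MeasureTheory ENNReal Real Set

noncomputable section

/-- index of the dyadic cube of level `v` containing `x` -/
def mm {n : ℕ} (v : ℕ) (x : En n) : Fin n → ℤ := fun i => ⌊(2 : ℝ) ^ v * x i⌋

/-- corner of the dyadic cube -/
def yc {n : ℕ} (v : ℕ) (m : Fin n → ℤ) : En n := WithLp.toLp 2 (fun i => (m i : ℝ) / 2 ^ v)

/-- simplified modular -/
def modu {n : ℕ} (a q : En n → ℝ) (lam : ℕ → (Fin n → ℤ) → ℂ) : ℝ≥0∞ :=
  ∫⁻ x, ∑' v : ℕ, ENNReal.ofReal (((2 : ℝ) ^ ((v : ℝ) * (a x + n / 2)) * ‖lam v (mm v x)‖) ^ q x)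

lemma mem_cube {n : ℕ} (v : ℕ) (m : Fin n → ℤ) (x : En n) :
    x ∈ dyadicCube n (v : ℤ) m ↔ m = mm v x := by
  simp only [dyadicCube, mem_ofPred_eq, zpow_natCast, mm, funext_iff]
  refine forall_congr' fun i => ?_
  rw [eq_comm, Int.floor_eq_iff]

lemma measurable_mm {n : ℕ} (v : ℕ) : Measurable (mm v : En n → Fin n → ℤ) := by
  refine measurable_pi_lambda _ fun i => ?_
  refine Int.measurable_floor.comp ?_
  fun_prop

lemma vol_cube {n : ℕ} (v : ℕ) (m : Fin n → ℤ) :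
    volume ((mm v : En n → Fin n → ℤ) ⁻¹' {m}) = ENNReal.ofReal (((2 : ℝ) ^ (v * n))⁻¹) := by
  have h : ((mm v : En n → Fin n → ℤ) ⁻¹' {m}) = (MeasurableEquiv.toLp 2 (Fin n → ℝ)).symm ⁻¹'
      (Set.pi univ fun i => Ico ((m i : ℝ) / 2 ^ v) ((m i + 1 : ℝ) / 2 ^ v)) := by
    ext x
    have hv : (0 : ℝ) < 2 ^ v := by positivity
    simp only [mem_preimage, mem_singleton_iff, mem_pi, mem_univ, true_implies, mem_Ico, mm,
      funext_iff, Int.floor_eq_iff, div_le_iff₀ hv, lt_div_iff₀ hv]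
    simp [mul_comm]
  rw [h, (EuclideanSpace.volume_preserving_symm_measurableEquiv_toLp (Fin n)).measure_preimage_equiv,
    Real.volume_pi_Ico]
  have : ∀ i, ((m i + 1 : ℝ) / 2 ^ v) - ((m i : ℝ) / 2 ^ v) = (2 ^ v)⁻¹ := by
    intro i; field_simp; ring
  simp only [this, Finset.prod_const, Finset.card_univ, Fintype.card_fin]
  rw [← ENNReal.ofReal_pow (by positivity), pow_mul, inv_pow]

lemma dist_yc {n : ℕ} (v : ℕ) (x : En n) : ‖x - yc v (mm v x)‖ ≤ (n + 1) / 2 ^ v := by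
  rw [EuclideanSpace.norm_eq]
  apply Real.sqrt_le_iff.2
  refine ⟨by positivity, ?_⟩
  have hv : (0 : ℝ) < 2 ^ v := by positivity
  have : ∀ i ∈ (Finset.univ : Finset (Fin n)), ‖(x - yc v (mm v x)) i‖ ^ 2 ≤ (1 / 2 ^ v : ℝ) ^ 2 := by
    intro i _
    have h1 := Int.floor_le ((2 : ℝ) ^ v * x i)
    have h2 := Int.lt_floor_add_one ((2 : ℝ) ^ v * x i)
    have : (x - yc v (mm v x)) i = (2 ^ v * x i - ⌊(2 : ℝ) ^ v * x i⌋) / 2 ^ v := by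
      change x i - ((⌊(2 : ℝ) ^ v * x i⌋ : ℤ) : ℝ) / 2 ^ v = _
      field_simp
    rw [this, norm_div, Real.norm_eq_abs, abs_of_nonneg (by linarith), Real.norm_eq_abs, abs_of_pos hv]
    gcongr
    linarith
  refine (Finset.sum_le_sum this).trans ?_
  simp only [Finset.sum_const, Finset.card_univ, Fintype.card_fin, nsmul_eq_mul, div_pow]
  rw [mul_div_assoc']
  gcongr
  nlinarith [(Nat.cast_nonneg n : (0 : ℝ) ≤ n)]

lemma dist_yc' {n : ℕ} (v : ℕ) (x : En n) : ‖x - yc v (mm v x)‖ ≤ n + 1 :=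
  (dist_yc v x).trans (div_le_self (by positivity) (one_le_pow₀ (by norm_num)))

lemma yc_mm {n : ℕ} (v : ℕ) (m : Fin n → ℤ) : mm v (yc v m) = m := by
  ext i
  have hv : (2 : ℝ) ^ v ≠ 0 := by positivity
  simp [mm, yc, mul_div_cancel₀ _ hv]

lemma ofReal_aux (s l c q : ℝ) (hs : 0 ≤ s) (hl : 0 ≤ l) (hc : 0 < c) (hq : 0 ≤ q) :
    (ENNReal.ofReal (s * l) / ENNReal.ofReal c) ^ q = ENNReal.ofReal ((s * (c⁻¹ * l)) ^ q) := by
  rw [← ENNReal.ofReal_div_of_pos hc, ENNReal.ofReal_rpow_of_nonneg (by positivity) hq]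
  congr 2
  field_simp

lemma seqNorm_eq {n : ℕ} (a q : En n → ℝ) (hq : ∀ x, 1 ≤ q x) (lam : ℕ → (Fin n → ℤ) → ℂ) :
    seqNorm a q q lam = sInf {c : ℝ≥0∞ | 0 < c ∧ ∫⁻ x, ∑' v : ℕ,
      (ENNReal.ofReal ((2 : ℝ) ^ ((v : ℝ) * (a x + n / 2)) * ‖lam v (mm v x)‖) / c) ^ q x ≤ 1} := by
  unfold seqNorm mixedNorm luxNorm
  congr 1
  ext c
  simp only [mem_ofPred_eq]
  refine and_congr_right fun hc => ?_
  have : ∀ x, ((∑' v : ℕ, (∑' m : Fin n → ℤ,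
      ENNReal.ofReal ((2 : ℝ) ^ ((v : ℝ) * (a x + n / 2)) * ‖lam v m‖) *
        (dyadicCube n (v : ℤ) m).indicator (fun _ => (1 : ℝ≥0∞)) x) ^ q x) ^ (1 / q x) / c) ^ q x
      = ∑' v : ℕ,
      (ENNReal.ofReal ((2 : ℝ) ^ ((v : ℝ) * (a x + n / 2)) * ‖lam v (mm v x)‖) / c) ^ q x := by
    intro x
    have hx : 0 < q x := by linarith [hq x]
    rw [ENNReal.div_rpow_of_nonneg _ _ hx.le, ← ENNReal.rpow_mul, one_div, inv_mul_cancel₀ hx.ne',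
      ENNReal.rpow_one, div_eq_mul_inv, ← ENNReal.tsum_mul_right]
    congr 1
    ext v
    rw [ENNReal.div_rpow_of_nonneg _ _ hx.le, div_eq_mul_inv]
    congr 2
    rw [tsum_eq_single (mm v x)]
    · rw [indicator_of_mem ((mem_cube v _ x).2 rfl), mul_one]
    · intro m hm
      rw [indicator_of_notMem (fun h => hm ((mem_cube v _ x).1 h)), mul_zero]
  simp only [this]

lemma norm_smul_aux (c : ℝ) (hc : 0 < c) (z : ℂ) : ‖c⁻¹ • z‖ = c⁻¹ * ‖z‖ := by
  rw [norm_smul, Real.norm_eq_abs, abs_of_pos (by positivity)]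

lemma modu_of_lt {n : ℕ} (a q : En n → ℝ) (hq : ∀ x, 1 ≤ q x) (lam : ℕ → (Fin n → ℤ) → ℂ)
    (c : ℝ) (hc : 0 < c) (h : seqNorm a q q lam < ENNReal.ofReal c) :
    modu a q (fun v m => c⁻¹ • lam v m) ≤ 1 := by
  rw [seqNorm_eq a q hq, sInf_lt_iff] at h
  obtain ⟨c', ⟨h0, h1⟩, h2⟩ := h
  refine le_trans ?_ h1
  unfold modu
  refine lintegral_mono fun x => ENNReal.tsum_le_tsum fun v => ?_
  have hx : 0 ≤ q x := by linarith [hq x]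
  rw [norm_smul_aux c hc, ← ofReal_aux _ _ c _ (by positivity) (norm_nonneg _) hc hx]
  gcongr

lemma seqNorm_le_of {n : ℕ} (a q : En n → ℝ) (hq : ∀ x, 1 ≤ q x) (lam : ℕ → (Fin n → ℤ) → ℂ)
    (c : ℝ) (hc : 0 < c) (h : modu a q (fun v m => c⁻¹ • lam v m) ≤ 1) :
    seqNorm a q q lam ≤ ENNReal.ofReal c := by
  rw [seqNorm_eq a q hq]
  refine sInf_le ⟨by simpa using hc, le_trans ?_ h⟩
  unfold modu
  refine lintegral_mono fun x => ENNReal.tsum_le_tsum fun v => ?_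
  have hx : 0 ≤ q x := by linarith [hq x]
  simp only []
  rw [norm_smul_aux c hc, ← ofReal_aux _ _ c _ (by positivity) (norm_nonneg _) hc hx]

lemma modu_scale {n : ℕ} (a q : En n → ℝ) (hq : ∀ x, 1 ≤ q x) (lam : ℕ → (Fin n → ℤ) → ℂ)
    (K : ℝ) (hK : 1 ≤ K) (h : modu a q lam ≤ ENNReal.ofReal K) :
    modu a q (fun v m => K⁻¹ • lam v m) ≤ 1 := by
  have hK0 : 0 < K := by linarith
  have : modu a q (fun v m => K⁻¹ • lam v m) ≤ ENNReal.ofReal K⁻¹ * modu a q lam := by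
    unfold modu
    rw [← lintegral_const_mul' _ _ ENNReal.ofReal_ne_top]
    refine lintegral_mono fun x => ?_
    simp only []
    rw [← ENNReal.tsum_mul_left]
    refine ENNReal.tsum_le_tsum fun v => ?_
    rw [norm_smul_aux K hK0, ← ENNReal.ofReal_mul (by positivity), mul_left_comm,
      Real.mul_rpow (by positivity) (by positivity)]
    gcongr
    calc K⁻¹ ^ q x ≤ K⁻¹ ^ (1 : ℝ) :=
          Real.rpow_le_rpow_of_exponent_ge (by positivity) (inv_le_one_of_one_le₀ hK) (hq x)
      _ = _ := Real.rpow_one _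
  refine this.trans ?_
  calc _ ≤ ENNReal.ofReal K⁻¹ * ENNReal.ofReal K := by gcongr
    _ = 1 := by rw [← ENNReal.ofReal_mul (by positivity), inv_mul_cancel₀ hK0.ne']; simp

lemma meas_of_loc {n : ℕ} {c : ℝ} {g : En n → ℝ} (h : LocLogHolder c g) : Measurable g := by
  refine Continuous.measurable (continuous_iff_continuousAt.2 fun x => ?_)
  rw [continuousAt_iff_punctured_nhds, tendsto_iff_norm_sub_tendsto_zero]
  refine squeeze_zero (fun _ => norm_nonneg _) (fun y => h.2 y x) ?_
  refine Filter.Tendsto.const_div_atTop ?_ _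
  refine Real.tendsto_log_atTop.comp ?_
  refine Filter.tendsto_atTop_add_const_left _ _ ?_
  simp only [one_div]
  exact tendsto_inv_nhdsGT_zero.comp (tendsto_norm_sub_self_nhdsNE x)

lemma young_aux (θ A B p p0 p1 : ℝ) (h0 : 0 < θ) (h1 : θ < 1) (hA : 0 ≤ A) (hB : 0 ≤ B)
    (hp0 : 1 ≤ p0) (hp1 : 1 ≤ p1) (hpp : 0 < p) (hp : 1 / p = (1 - θ) / p0 + θ / p1) :
    (A ^ (1 - θ) * B ^ θ) ^ p ≤ A ^ p0 + B ^ p1 := by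
  have q0 : 0 < p0 := by linarith
  have q1 : 0 < p1 := by linarith
  have h1' : 0 < 1 - θ := by linarith
  have hw : (1 - θ) * p / p0 + θ * p / p1 = 1 := by
    have : (1 - θ) * p / p0 + θ * p / p1 = p * (1 / p) := by rw [hp]; ring
    rw [this]; field_simp
  have w0 : 0 ≤ (1 - θ) * p / p0 := by positivity
  have w1 : 0 ≤ θ * p / p1 := by positivity
  have := Real.geom_mean_le_arith_mean2_weighted w0 w1 (Real.rpow_nonneg hA p0) (Real.rpow_nonneg hB p1) hw
  rw [← Real.rpow_mul hA, ← Real.rpow_mul hB, mul_div_cancel₀ _ q0.ne', mul_div_cancel₀ _ q1.ne'] at this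
  rw [Real.mul_rpow (by positivity) (by positivity), ← Real.rpow_mul hA, ← Real.rpow_mul hB]
  refine this.trans (add_le_add ?_ ?_)
  · exact mul_le_of_le_one_left (by positivity) (by linarith)
  · exact mul_le_of_le_one_left (by positivity) (by linarith)

lemma modu_meas {n : ℕ} (a q : En n → ℝ) (ha : Measurable a) (hq : Measurable q)
    (lam : ℕ → (Fin n → ℤ) → ℂ) : Measurable fun x => ∑' v : ℕ,
      ENNReal.ofReal (((2 : ℝ) ^ ((v : ℝ) * (a x + n / 2)) * ‖lam v (mm v x)‖) ^ q x) := by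
  refine Measurable.tsum fun v => ?_
  have : Measurable fun x : En n => ‖lam v (mm v x)‖ :=
    (measurable_of_countable fun m => ‖lam v m‖).comp (measurable_mm v)
  fun_prop

lemma p_bds (θ p p0 p1 b : ℝ) (h0 : 0 < θ) (h1 : θ < 1) 
    (hp0 : 1 ≤ p0) (hp1 : 1 ≤ p1) (hb0 : p0 ≤ b) (hb1 : p1 ≤ b) (hp : 1 / p = (1 - θ) / p0 + θ / p1) :
    1 ≤ p ∧ p ≤ b := by
  have q0 : 0 < p0 := by linarith
  have q1 : 0 < p1 := by linarith
  have h1' : 0 < 1 - θ := by linarith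
  have hb : 0 < b := by linarith
  have hpp : 0 < 1 / p := by rw [hp]; positivity
  have hpos : 0 < p := one_div_pos.1 hpp
  constructor
  · have : 1 / p ≤ 1 := by
      rw [hp]
      have := div_le_self h1'.le hp0
      have := div_le_self h0.le hp1
      linarith
    rwa [div_le_one hpos] at this
  · have : 1 / b ≤ 1 / p := by
      rw [hp]
      have e : 1 / b = (1 - θ) / b + θ / b := by ring
      rw [e]
      gcongr
    exact (one_div_le_one_div hb hpos).1 this

lemma dir1 {n : ℕ} (θ : ℝ) (hθ : θ ∈ Set.Ioo (0 : ℝ) 1)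
    (p₀ p₁ α₀ α₁ p α : En n → ℝ) (m0 : Measurable p₀) (ma : Measurable α₀) 
    (hp₀b : ∀ x, 1 ≤ p₀ x) (hp₁b : ∀ x, 1 ≤ p₁ x) (hpb : ∀ x, 1 ≤ p x)
    (hp : ∀ x, 1 / p x = (1 - θ) / p₀ x + θ / p₁ x)
    (hα : ∀ x, α x = (1 - θ) * α₀ x + θ * α₁ x) (lam : ℕ → (Fin n → ℤ) → ℂ) :
      ENNReal.ofReal (1 / 4) * seqNorm α p p lam ≤
          calderonNorm (seqNorm α₀ p₀ p₀) (seqNorm α₁ p₁ p₁) θ lam := by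
  obtain ⟨t0, t1⟩ := hθ
  have t1' : 0 < 1 - θ := by linarith
  refine le_sInf ?_
  rintro M ⟨μ, ν, hμ, hν, hl⟩
  refine ENNReal.le_of_forall_pos_le_add fun ε hε hM => ?_
  set r : ℝ := M.toReal + ε with hr
  have hr0 : 0 < r := by positivity
  have hMr : M + ε = ENNReal.ofReal r := by
    rw [hr, ENNReal.ofReal_add ENNReal.toReal_nonneg (NNReal.coe_nonneg ε), ENNReal.ofReal_toReal hM.ne]
    simp
  have hl' : ∀ v m, ‖lam v m‖ ≤ r * (‖μ v m‖ ^ (1 - θ) * ‖ν v m‖ ^ θ) := by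
    intro v m
    have h1 : ENNReal.ofReal ‖lam v m‖ ≤
        ENNReal.ofReal (r * (‖μ v m‖ ^ (1 - θ) * ‖ν v m‖ ^ θ)) := by
      refine (hl v m).trans ?_
      rw [ENNReal.ofReal_mul hr0.le, ENNReal.ofReal_mul (by positivity),
        ENNReal.ofReal_rpow_of_nonneg (by positivity) t1'.le,
        ENNReal.ofReal_rpow_of_nonneg (by positivity) t0.le, ← mul_assoc]
      gcongr
      rw [← hMr]
      exact le_self_add
    exact (ENNReal.ofReal_le_ofReal_iff (by positivity)).1 h1
  rw [hMr]
  have two : (1 : ℝ≥0∞) < ENNReal.ofReal 2 := by norm_num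
  have hμ' := modu_of_lt α₀ p₀ hp₀b μ 2 two_pos (hμ.trans_lt two)
  have hν' := modu_of_lt α₁ p₁ hp₁b ν 2 two_pos (hν.trans_lt two)
  have key : modu α p (fun v m => (2 * r)⁻¹ • lam v m) ≤ ENNReal.ofReal 2 := by
    have : modu α p (fun v m => (2 * r)⁻¹ • lam v m) ≤
        modu α₀ p₀ (fun v m => (2 : ℝ)⁻¹ • μ v m) + modu α₁ p₁ (fun v m => (2 : ℝ)⁻¹ • ν v m) := by
      unfold modu
      rw [← lintegral_add_left (modu_meas α₀ p₀ ma m0 (fun v m => (2 : ℝ)⁻¹ • μ v m))]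
      refine lintegral_mono fun x => ?_
      simp only []
      rw [← ENNReal.tsum_add]
      refine ENNReal.tsum_le_tsum fun v => ?_
      rw [← ENNReal.ofReal_add (by positivity) (by positivity)]
      apply ENNReal.ofReal_le_ofReal
      rw [norm_smul_aux _ two_pos, norm_smul_aux _ two_pos, norm_smul_aux _ (by positivity : 0 < 2 * r)]
      refine le_trans ?_ (young_aux θ _ _ (p x) (p₀ x) (p₁ x) t0 t1 (by positivity) (by positivity)
        (hp₀b x) (hp₁b x) (by linarith [hpb x]) (hp x))
      refine Real.rpow_le_rpow (by positivity) ?_ (by linarith [hpb x])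
      have e1 : (2 : ℝ) ^ ((v : ℝ) * (α x + n / 2)) =
          ((2 : ℝ) ^ ((v : ℝ) * (α₀ x + n / 2))) ^ (1 - θ) *
          ((2 : ℝ) ^ ((v : ℝ) * (α₁ x + n / 2))) ^ θ := by
        rw [← Real.rpow_mul two_pos.le, ← Real.rpow_mul two_pos.le, ← Real.rpow_add two_pos, hα]
        congr 1; ring
      have e2 : (2 : ℝ)⁻¹ = (2 : ℝ)⁻¹ ^ (1 - θ) * (2 : ℝ)⁻¹ ^ θ := by
        rw [← Real.rpow_add (by norm_num)]; simp
      generalize mm v x = m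
      have h3 : (2 * r)⁻¹ * ‖lam v m‖ ≤ (2 : ℝ)⁻¹ * (‖μ v m‖ ^ (1 - θ) * ‖ν v m‖ ^ θ) := by
        rw [mul_inv, mul_assoc]
        refine mul_le_mul_of_nonneg_left ?_ (by norm_num)
        rw [inv_mul_le_iff₀ hr0]
        exact hl' v m
      rw [Real.mul_rpow (by positivity) (by positivity), Real.mul_rpow (by positivity) (by positivity),
        Real.mul_rpow (by positivity) (by positivity), Real.mul_rpow (by positivity) (by positivity), e1]
      refine (mul_le_mul_of_nonneg_left h3 (by positivity)).trans (le_of_eq ?_)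
      conv_lhs => rw [e2]
      ring
    refine this.trans ((add_le_add hμ' hν').trans ?_)
    norm_num
  have k2 := modu_scale α p hpb _ 2 (by norm_num) key
  have k3 := seqNorm_le_of α p hpb lam (4 * r) (by positivity) (by
    convert k2 using 4
    rw [smul_smul]
    congr 1
    rw [← mul_inv]; ring)
  calc _ ≤ ENNReal.ofReal (1 / 4) * ENNReal.ofReal (4 * r) := by gcongr
    _ = _ := by rw [← ENNReal.ofReal_mul (by norm_num)]; congr 1; ring

lemma norm_cmp {n : ℕ} (v : ℕ) (x : En n) : 1 + ‖x‖ ≤ (n + 2) * (1 + ‖yc v (mm v x)‖) := by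
  have h := dist_yc' v x
  have h2 := norm_le_norm_add_norm_sub' x (yc v (mm v x))
  nlinarith [norm_nonneg (yc v (mm v x)), (Nat.cast_nonneg n : (0 : ℝ) ≤ n)]

lemma norm_cmp' {n : ℕ} (v : ℕ) (x : En n) : 1 + ‖yc v (mm v x)‖ ≤ (n + 2) * (1 + ‖x‖) := by
  have h := dist_yc' v x
  have h2 := norm_le_norm_add_norm_sub' (yc v (mm v x)) x
  rw [norm_sub_rev] at h2
  nlinarith [norm_nonneg x, (Nat.cast_nonneg n : (0 : ℝ) ≤ n)]

/-- the logarithmic weight -/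
def WW {n : ℕ} (v : ℕ) (x : En n) : ℝ := 1 + v + Real.log (Real.exp 1 + ‖x‖)

lemma one_le_log (t : ℝ) (ht : 0 ≤ t) : 1 ≤ Real.log (Real.exp 1 + t) := by
  rw [Real.le_log_iff_exp_le (by positivity)]; linarith

lemma osc_loc {n : ℕ} {c : ℝ} {g : En n → ℝ} (h : LocLogHolder c g) :
    ∃ C : ℝ, 0 ≤ C ∧ ∀ (v : ℕ) (x : En n), |g x - g (yc v (mm v x))| * (1 + v) ≤ C := by
  obtain ⟨hc, h⟩ := h
  have hl2 : 0 < Real.log 2 := Real.log_pos (by norm_num)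
  have hlD : 0 ≤ Real.log (n + 1) := Real.log_nonneg (by linarith [(Nat.cast_nonneg n : (0 : ℝ) ≤ n)])
  refine ⟨c * (1 + (Real.log (n + 1) + 1) / Real.log 2), by positivity, fun v x => ?_⟩
  set y := yc v (mm v x) with hy
  by_cases hxy : ‖x - y‖ = 0
  · have : x = y := sub_eq_zero.1 (norm_eq_zero.1 hxy)
    rw [← this]; simp; positivity
  have hpos : 0 < ‖x - y‖ := lt_of_le_of_ne (norm_nonneg _) (Ne.symm hxy)
  have hd : ‖x - y‖ ≤ (n + 1) / 2 ^ v := dist_yc v x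
  set T := Real.log (Real.exp 1 + 1 / ‖x - y‖) with hT
  have hT1 : 1 ≤ T := one_le_log _ (by positivity)
  have h3 : (v : ℝ) * Real.log 2 ≤ Real.log (n + 1) + T := by
    rw [← Real.log_pow, hT, ← Real.log_mul (by positivity) (by positivity)]
    apply Real.log_le_log (by positivity)
    rw [le_div_iff₀ (by positivity)] at hd
    have : (2 : ℝ) ^ v ≤ (n + 1) * (1 / ‖x - y‖) := by
      rw [mul_one_div, le_div_iff₀ hpos]; linarith
    have h4 : 0 ≤ ((n : ℝ) + 1) * Real.exp 1 := by positivity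
    linarith
  have h5 : 1 + (v : ℝ) ≤ T * (1 + (Real.log (n + 1) + 1) / Real.log 2) := by
    have : (v : ℝ) ≤ (Real.log (n + 1) + T) / Real.log 2 := by rwa [le_div_iff₀ hl2]
    have h6 : (Real.log (n + 1) + T) / Real.log 2 ≤ T * ((Real.log (n + 1) + 1) / Real.log 2) := by
      rw [mul_div_assoc']
      gcongr
      nlinarith
    linarith
  have h7 := h x y
  rw [← hT, le_div_iff₀ (by linarith)] at h7
  calc |g x - g y| * (1 + v) ≤ |g x - g y| * (T * (1 + (Real.log (n + 1) + 1) / Real.log 2)) := by gcongr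
    _ = (|g x - g y| * T) * (1 + (Real.log (n + 1) + 1) / Real.log 2) := by ring
    _ ≤ _ := by gcongr

lemma osc_glob {n : ℕ} {c : ℝ} {g : En n → ℝ} (h : GlobLogHolder c g) :
    ∃ C : ℝ, 0 ≤ C ∧ ∀ (v : ℕ) (x : En n), |g x - g (yc v (mm v x))| * WW v x ≤ C := by
  obtain ⟨h1, gi, d, hd, h2⟩ := h
  obtain ⟨C, hC, h3⟩ := osc_loc h1
  have hlD : 0 ≤ Real.log (n + 2) := Real.log_nonneg (by linarith [(Nat.cast_nonneg n : (0 : ℝ) ≤ n)])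
  refine ⟨C + (d + d * (1 + Real.log (n + 2))), by positivity, fun v x => ?_⟩
  have h4 := h3 v x
  have hcmp := norm_cmp v x
  set y := yc v (mm v x) with hy
  have hx := h2 x
  have hyy := h2 y
  have lx := one_le_log ‖x‖ (norm_nonneg _)
  have ly := one_le_log ‖y‖ (norm_nonneg _)
  have h5 : Real.log (Real.exp 1 + ‖x‖) ≤ Real.log (Real.exp 1 + ‖y‖) * (1 + Real.log (n + 2)) := by
    have : Real.log (Real.exp 1 + ‖x‖) ≤ Real.log (n + 2) + Real.log (Real.exp 1 + ‖y‖) := by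
      rw [← Real.log_mul (by positivity) (by positivity)]
      apply Real.log_le_log (by positivity)
      have := Real.add_one_le_exp 1
      nlinarith [(Nat.cast_nonneg n : (0 : ℝ) ≤ n)]
    nlinarith
  rw [le_div_iff₀ (by linarith)] at hx hyy
  have h6 : |g x - g y| ≤ |g x - gi| + |g y - gi| := by
    have := abs_sub_le (g x) gi (g y)
    rwa [abs_sub_comm gi] at this
  have h7 : |g x - g y| * Real.log (Real.exp 1 + ‖x‖) ≤ d + d * (1 + Real.log (n + 2)) := by
    calc _ ≤ (|g x - gi| + |g y - gi|) * Real.log (Real.exp 1 + ‖x‖) := by gcongr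
      _ = |g x - gi| * Real.log (Real.exp 1 + ‖x‖) + |g y - gi| * Real.log (Real.exp 1 + ‖x‖) := by ring
      _ ≤ d + |g y - gi| * (Real.log (Real.exp 1 + ‖y‖) * (1 + Real.log (n + 2))) := by gcongr
      _ = d + |g y - gi| * Real.log (Real.exp 1 + ‖y‖) * (1 + Real.log (n + 2)) := by ring
      _ ≤ _ := by gcongr
  unfold WW
  rw [mul_add]
  exact add_le_add h4 h7

/-- the additive error -/
def EE {n : ℕ} (v : ℕ) (m : Fin n → ℤ) : ℝ := ((2 : ℝ) ^ v)⁻¹ * ((1 + ‖(yc v m : En n)‖) ^ (n + 1))⁻¹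

lemma EE_pos {n : ℕ} (v : ℕ) (m : Fin n → ℤ) : 0 < EE v m := by unfold EE; positivity

lemma EE_le_one {n : ℕ} (v : ℕ) (m : Fin n → ℤ) : EE v m ≤ 1 := by
  unfold EE
  apply mul_le_one₀ (inv_le_one_of_one_le₀ (one_le_pow₀ (by norm_num))) (by positivity)
  exact inv_le_one_of_one_le₀ (one_le_pow₀ (by linarith [norm_nonneg (yc v m : En n)]))

lemma EE_le {n : ℕ} (v : ℕ) (x : En n) :
    EE v (mm v x) ≤ ((n : ℝ) + 2) ^ (n + 1) * ((2 : ℝ) ^ v)⁻¹ * ((1 + ‖x‖) ^ (n + 1))⁻¹ := by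
  unfold EE
  rw [mul_comm (((n : ℝ) + 2) ^ (n + 1)), mul_assoc]
  gcongr
  rw [← div_eq_mul_inv, le_div_iff₀ (by positivity), inv_mul_le_iff₀ (by positivity), ← mul_pow,
    mul_comm (1 + _)]
  gcongr
  exact norm_cmp v x

lemma EE_log {n : ℕ} (v : ℕ) (x : En n) :
    -((1 + (n + 1) * (1 + Real.log (n + 2))) * WW v x) ≤ Real.log (EE v (mm v x)) := by
  have hn : (0 : ℝ) ≤ n := Nat.cast_nonneg n
  have hlD : 0 ≤ Real.log (n + 2) := Real.log_nonneg (by linarith)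
  have h := norm_cmp' v x
  have lx := one_le_log ‖x‖ (norm_nonneg _)
  unfold EE
  rw [Real.log_mul (by positivity) (by positivity), Real.log_inv, Real.log_inv, Real.log_pow, Real.log_pow]
  have h5 : Real.log (1 + ‖yc v (mm v x)‖) ≤ Real.log (n + 2) + Real.log (Real.exp 1 + ‖x‖) := by
    rw [← Real.log_mul (by positivity) (by positivity)]
    apply Real.log_le_log (by positivity)
    refine h.trans ?_
    have := Real.add_one_le_exp 1
    gcongr
    linarith
  have h6 : Real.log 2 ≤ 1 := by linarith [Real.log_two_lt_d9]
  have hW : (v : ℝ) ≤ WW v x := by unfold WW; linarith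
  have hW1 : 1 ≤ WW v x := by unfold WW; linarith [(Nat.cast_nonneg v : (0 : ℝ) ≤ v)]
  have hW2 : Real.log (Real.exp 1 + ‖x‖) ≤ WW v x := by
    unfold WW; linarith [(Nat.cast_nonneg v : (0 : ℝ) ≤ v)]
  have a1 : (v : ℝ) * Real.log 2 ≤ WW v x := by
    nlinarith [(Nat.cast_nonneg v : (0 : ℝ) ≤ v)]
  have a2 : ((n + 1 : ℕ) : ℝ) * Real.log (1 + ‖yc v (mm v x)‖) ≤
      (n + 1) * ((1 + Real.log (n + 2)) * WW v x) := by
    push_cast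
    gcongr
    nlinarith
  linarith

/-- truncated coefficient -/
def LL {n : ℕ} (α : En n → ℝ) (lam : ℕ → (Fin n → ℤ) → ℂ) (v : ℕ) (m : Fin n → ℤ) : ℝ :=
  max ((2 : ℝ) ^ ((v : ℝ) * (α (yc v m) + n / 2)) * ‖lam v m‖) (EE v m)

/-- the factor sequence -/
def muS {n : ℕ} (α p a q : En n → ℝ) (lam : ℕ → (Fin n → ℤ) → ℂ) (v : ℕ) (m : Fin n → ℤ) : ℝ :=
  (2 : ℝ) ^ (-((v : ℝ) * (a (yc v m) + n / 2))) * LL α lam v m ^ (p (yc v m) / q (yc v m))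

lemma pow_osc {n : ℕ} {a : En n → ℝ} {C : ℝ}
    (h : ∀ (v : ℕ) (x : En n), |a x - a (yc v (mm v x))| * (1 + v) ≤ C) (v : ℕ) (x : En n) :
    (v : ℝ) * |a x - a (yc v (mm v x))| ≤ C := by
  have := h v x
  nlinarith [abs_nonneg (a x - a (yc v (mm v x)))]

lemma L_cmp {n : ℕ} {α : En n → ℝ} {C : ℝ}
    (h : ∀ (v : ℕ) (x : En n), |α x - α (yc v (mm v x))| * (1 + v) ≤ C) (v : ℕ) (x : En n) (l : ℝ)
    (hl : 0 ≤ l) :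
    (2 : ℝ) ^ ((v : ℝ) * (α (yc v (mm v x)) + n / 2)) * l ≤
      (2 : ℝ) ^ C * ((2 : ℝ) ^ ((v : ℝ) * (α x + n / 2)) * l) := by
  have h1 := pow_osc h v x
  rw [← mul_assoc, ← Real.rpow_add two_pos]
  gcongr
  · norm_num
  · have := neg_abs_le (α x - α (yc v (mm v x)))
    nlinarith [(Nat.cast_nonneg v : (0 : ℝ) ≤ v)]

lemma L_upper {n : ℕ} {α p : En n → ℝ} {C : ℝ} (hp : ∀ x, 1 ≤ p x)
    (h : ∀ (v : ℕ) (x : En n), |α x - α (yc v (mm v x))| * (1 + v) ≤ C)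
    (lam : ℕ → (Fin n → ℤ) → ℂ) (hlam : modu α p lam ≤ 1) (v : ℕ) (m : Fin n → ℤ) :
    (2 : ℝ) ^ ((v : ℝ) * (α (yc v m) + n / 2)) * ‖lam v m‖ ≤ (2 : ℝ) ^ C * (2 : ℝ) ^ (v * n) := by
  set L := (2 : ℝ) ^ ((v : ℝ) * (α (yc v m) + n / 2)) * ‖lam v m‖ with hL
  rw [← div_le_iff₀' (by positivity)]
  set s := L / (2 : ℝ) ^ C with hs
  by_contra! hcon
  have hs1 : 1 ≤ s := (one_le_pow₀ (by norm_num)).trans hcon.le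
  have key : ENNReal.ofReal s * ENNReal.ofReal (((2 : ℝ) ^ (v * n))⁻¹) ≤ 1 := by
    rw [← vol_cube v m, ← lintegral_indicator_const (measurable_mm v (measurableSet_singleton m))]
    refine le_trans ?_ hlam
    unfold modu
    refine lintegral_mono fun x => ?_
    by_cases hx : x ∈ (mm v : En n → Fin n → ℤ) ⁻¹' {m}
    · rw [indicator_of_mem hx]
      refine le_trans ?_ (ENNReal.le_tsum v)
      apply ENNReal.ofReal_le_ofReal
      have hx' : mm v x = m := hx
      have h1 := L_cmp h v x ‖lam v m‖ (norm_nonneg _)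
      rw [hx', ← hL, ← div_le_iff₀' (by positivity), ← hs] at h1
      rw [hx']
      calc s ≤ _ := h1
        _ = _ := (Real.rpow_one _).symm
        _ ≤ _ := Real.rpow_le_rpow_of_exponent_le (hs1.trans h1) (hp x)
    · rw [indicator_of_notMem hx]; exact zero_le
  rw [← ENNReal.ofReal_mul (by linarith), ENNReal.ofReal_le_one, ← div_eq_mul_inv,
    div_le_one (by positivity)] at key
  linarith

lemma rpow_bdd (L e K C W : ℝ) (hL : 0 < L) (hK : |Real.log L| ≤ K * W) (hK0 : 0 ≤ K)
    (he : |e| * W ≤ C) : L ^ e ≤ Real.exp (K * C) := by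
  rw [Real.rpow_def_of_pos hL]
  apply Real.exp_le_exp.2
  calc Real.log L * e ≤ |Real.log L * e| := le_abs_self _
    _ = |Real.log L| * |e| := abs_mul _ _
    _ ≤ (K * W) * |e| := by gcongr
    _ = K * (|e| * W) := by ring
    _ ≤ K * C := by gcongr

lemma err_fin (n : ℕ) : ∫⁻ x : En n, ∑' v : ℕ, ENNReal.ofReal
    (((n : ℝ) + 2) ^ (n + 1) * ((2 : ℝ) ^ v)⁻¹ * ((1 + ‖x‖) ^ (n + 1))⁻¹) < ⊤ := by
  have : ∀ x : En n, ∑' v : ℕ, ENNReal.ofReal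
    (((n : ℝ) + 2) ^ (n + 1) * ((2 : ℝ) ^ v)⁻¹ * ((1 + ‖x‖) ^ (n + 1))⁻¹) =
      2 * ENNReal.ofReal (((n : ℝ) + 2) ^ (n + 1) * (1 + ‖x‖) ^ (-((n : ℝ) + 1))) := by
    intro x
    have e : ∀ v : ℕ, ENNReal.ofReal
      (((n : ℝ) + 2) ^ (n + 1) * ((2 : ℝ) ^ v)⁻¹ * ((1 + ‖x‖) ^ (n + 1))⁻¹) =
        (2 : ℝ≥0∞)⁻¹ ^ v * ENNReal.ofReal (((n : ℝ) + 2) ^ (n + 1) * (1 + ‖x‖) ^ (-((n : ℝ) + 1))) := by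
      intro v
      have : (2 : ℝ≥0∞)⁻¹ ^ v = ENNReal.ofReal (((2 : ℝ) ^ v)⁻¹) := by
        rw [ENNReal.ofReal_inv_of_pos (by positivity), ENNReal.ofReal_pow (by norm_num), ENNReal.inv_pow]
        simp
      rw [this, ← ENNReal.ofReal_mul (by positivity), Real.rpow_neg (by positivity)]
      congr 1
      have : (1 + ‖x‖) ^ ((n : ℝ) + 1) = (1 + ‖x‖) ^ (n + 1) := by
        rw [← Real.rpow_natCast]; push_cast; rfl
      rw [this]; ring
    simp only [e]
    rw [ENNReal.tsum_mul_right, ENNReal.tsum_geometric, ENNReal.one_sub_inv_two, inv_inv]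
  simp only [this]
  rw [lintegral_const_mul' _ _ (by norm_num)]
  refine ENNReal.mul_lt_top (by norm_num) ?_
  refine Integrable.lintegral_lt_top ?_
  refine Integrable.const_mul ?_ _
  apply integrable_one_add_norm
  simp

lemma err_meas (n : ℕ) : Measurable fun x : En n => ∑' v : ℕ, ENNReal.ofReal
    (((n : ℝ) + 2) ^ (n + 1) * ((2 : ℝ) ^ v)⁻¹ * ((1 + ‖x‖) ^ (n + 1))⁻¹) := by
  refine Measurable.tsum fun v => ?_
  fun_prop

lemma LL_pos {n : ℕ} (α : En n → ℝ) (lam : ℕ → (Fin n → ℤ) → ℂ) (v : ℕ) (m : Fin n → ℤ) :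
    0 < LL α lam v m := lt_of_lt_of_le (EE_pos v m) (le_max_right _ _)

lemma LL_log {n : ℕ} {α p : En n → ℝ} {C : ℝ} (hC : 0 ≤ C) (hp : ∀ x, 1 ≤ p x)
    (h : ∀ (v : ℕ) (x : En n), |α x - α (yc v (mm v x))| * (1 + v) ≤ C)
    (lam : ℕ → (Fin n → ℤ) → ℂ) (hlam : modu α p lam ≤ 1) (v : ℕ) (x : En n) :
    |Real.log (LL α lam v (mm v x))| ≤
      (C + n + (1 + (n + 1) * (1 + Real.log (n + 2)))) * WW v x := by
  have hn : (0 : ℝ) ≤ n := Nat.cast_nonneg n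
  have hv : (0 : ℝ) ≤ v := Nat.cast_nonneg v
  have hlD : 0 ≤ Real.log (n + 2) := Real.log_nonneg (by linarith)
  have lx := one_le_log ‖x‖ (norm_nonneg _)
  have hW : (v : ℝ) ≤ WW v x := by unfold WW; linarith
  have hW1 : 1 ≤ WW v x := by unfold WW; linarith
  have hpos := LL_pos α lam v (mm v x)
  have h6 : Real.log 2 ≤ 1 := by linarith [Real.log_two_lt_d9]
  have h60 : 0 ≤ Real.log 2 := Real.log_nonneg (by norm_num)
  rw [abs_le]
  constructor
  · have h1 := EE_log v x
    have h2 : Real.log (EE v (mm v x)) ≤ Real.log (LL α lam v (mm v x)) :=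
      Real.log_le_log (EE_pos _ _) (le_max_right _ _)
    have h3 : 0 ≤ (C + n) * WW v x := by positivity
    linarith
  · have h1 : LL α lam v (mm v x) ≤ (2 : ℝ) ^ C * (2 : ℝ) ^ (v * n) := by
      refine max_le (L_upper hp h lam hlam v _) ((EE_le_one _ _).trans ?_)
      exact one_le_mul_of_one_le_of_one_le (Real.one_le_rpow (by norm_num) hC)
        (one_le_pow₀ (by norm_num))
    have h2 := Real.log_le_log hpos h1
    rw [Real.log_mul (by positivity) (by positivity), Real.log_rpow two_pos, Real.log_pow] at h2
    push_cast at h2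
    have h3 : C * Real.log 2 ≤ C * WW v x := by gcongr; linarith
    have h4 : (v : ℝ) * n * Real.log 2 ≤ n * WW v x := by
      calc (v : ℝ) * n * Real.log 2 ≤ (v : ℝ) * n * 1 := by gcongr
        _ = n * v := by ring
        _ ≤ _ := by gcongr
    have h5 : 0 ≤ (1 + ((n : ℝ) + 1) * (1 + Real.log (n + 2))) * WW v x := by positivity
    linarith

lemma muS_nonneg {n : ℕ} (α p a q : En n → ℝ) (lam : ℕ → (Fin n → ℤ) → ℂ) (v : ℕ)
    (m : Fin n → ℤ) : 0 ≤ muS α p a q lam v m := by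
  have := LL_pos α lam v m
  unfold muS; positivity

lemma core {n : ℕ} (α p a q : En n → ℝ) (b Ca Cα Cp Cq : ℝ)
    (hp : ∀ x, 1 ≤ p x ∧ p x ≤ b) (hq : ∀ x, 1 ≤ q x ∧ q x ≤ b) (hCα0 : 0 ≤ Cα) (hCa0 : 0 ≤ Ca)
    (hCa : ∀ (v : ℕ) (x : En n), |a x - a (yc v (mm v x))| * (1 + v) ≤ Ca)
    (hCα : ∀ (v : ℕ) (x : En n), |α x - α (yc v (mm v x))| * (1 + v) ≤ Cα)
    (hCp : ∀ (v : ℕ) (x : En n), |p x - p (yc v (mm v x))| * WW v x ≤ Cp)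
    (hCq : ∀ (v : ℕ) (x : En n), |q x - q (yc v (mm v x))| * WW v x ≤ Cq) :
    ∃ K : ℝ, 1 ≤ K ∧ ∀ lam : ℕ → (Fin n → ℤ) → ℂ, modu α p lam ≤ 1 →
      modu a q (fun v m => ((muS α p a q lam v m : ℝ) : ℂ)) ≤ ENNReal.ofReal K := by
  have hb1 : 1 ≤ b := (hp 0).1.trans (hp 0).2
  set Kl : ℝ := Cα + n + (1 + (n + 1) * (1 + Real.log (n + 2))) with hKl
  have hn : (0 : ℝ) ≤ n := Nat.cast_nonneg n
  have hlD : 0 ≤ Real.log (n + 2) := Real.log_nonneg (by linarith)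
  have hKl0 : 0 ≤ Kl := by positivity
  set K1 : ℝ := (2 : ℝ) ^ (Ca * b) * Real.exp (Kl * (b * Cq + Cp)) * (2 : ℝ) ^ (Cα * b) with hK1
  have hK10 : 0 ≤ K1 := by positivity
  set H := ∫⁻ x : En n, ∑' v : ℕ, ENNReal.ofReal
    (((n : ℝ) + 2) ^ (n + 1) * ((2 : ℝ) ^ v)⁻¹ * ((1 + ‖x‖) ^ (n + 1))⁻¹) with hH
  have hHf : H ≠ ⊤ := (err_fin n).ne
  refine ⟨max 1 (K1 * (1 + H.toReal)), le_max_left _ _, fun lam hlam => ?_⟩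
  have main : modu a q (fun v m => ((muS α p a q lam v m : ℝ) : ℂ)) ≤
      ENNReal.ofReal K1 * (modu α p lam + H) := by
    rw [hH]
    unfold modu
    rw [← lintegral_add_right _ (err_meas n), ← lintegral_const_mul' _ _ ENNReal.ofReal_ne_top]
    refine lintegral_mono fun x => ?_
    simp only []
    rw [← ENNReal.tsum_add, ← ENNReal.tsum_mul_left]
    refine ENNReal.tsum_le_tsum fun v => ?_
    rw [← ENNReal.ofReal_add (by positivity) (by positivity), ← ENNReal.ofReal_mul hK10]
    apply ENNReal.ofReal_le_ofReal
    rw [Complex.norm_real, Real.norm_eq_abs, abs_of_nonneg (muS_nonneg _ _ _ _ _ _ _)]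
    have hlog := LL_log hCα0 (fun x => (hp x).1) hCα lam hlam v x
    have hEle := EE_le v x
    have hLpos := LL_pos α lam v (mm v x)
    have hEpos := EE_pos v (mm v x)
    have hE1 := EE_le_one v (mm v x)
    have hoa := pow_osc hCa v x
    have hop := hCp v x
    have hoq := hCq v x
    have hcm := L_cmp hCα v x ‖lam v (mm v x)‖ (norm_nonneg _)
    unfold muS
    have hLdef : LL α lam v (mm v x) = max ((2 : ℝ) ^ ((v : ℝ) * (α (yc v (mm v x)) + n / 2)) *
      ‖lam v (mm v x)‖) (EE v (mm v x)) := rfl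
    set m := mm v x
    set y : En n := yc v m
    set L := LL α lam v m
    set R := (2 : ℝ) ^ ((v : ℝ) * (α x + n / 2)) * ‖lam v m‖
    have hR0 : 0 ≤ R := by positivity
    have hpx := hp x
    have hqx := hq x
    have hpy := hp y
    have hqy := hq y
    have hW0 : 0 ≤ WW v x := by
      have := one_le_log ‖x‖ (norm_nonneg _)
      unfold WW; positivity
    have e1 : (2 : ℝ) ^ ((v : ℝ) * (a x + n / 2)) * ((2 : ℝ) ^ (-((v : ℝ) * (a y + n / 2))) *
        L ^ (p y / q y)) = (2 : ℝ) ^ ((v : ℝ) * (a x - a y)) * L ^ (p y / q y) := by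
      rw [← mul_assoc, ← Real.rpow_add two_pos]
      congr 2; ring
    rw [e1, Real.mul_rpow (by positivity) (by positivity), ← Real.rpow_mul two_pos.le,
      ← Real.rpow_mul hLpos.le]
    have b1 : (2 : ℝ) ^ ((v : ℝ) * (a x - a y) * q x) ≤ (2 : ℝ) ^ (Ca * b) := by
      apply Real.rpow_le_rpow_of_exponent_le (by norm_num)
      have : (v : ℝ) * (a x - a y) ≤ Ca :=
        (mul_le_mul_of_nonneg_left (le_abs_self _) (Nat.cast_nonneg v)).trans hoa
      calc _ ≤ Ca * q x := mul_le_mul_of_nonneg_right this (by linarith)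
        _ ≤ _ := mul_le_mul_of_nonneg_left hqx.2 hCa0
    have b2 : L ^ (p y / q y * q x) ≤ Real.exp (Kl * (b * Cq + Cp)) * L ^ p x := by
      have : p y / q y * q x = (p y / q y * q x - p x) + p x := by ring
      rw [this, Real.rpow_add hLpos]
      gcongr
      refine rpow_bdd L _ Kl _ (WW v x) hLpos hlog hKl0 ?_
      have hqy0 : 0 < q y := by linarith
      have e : p y / q y * q x - p x = p y / q y * (q x - q y) - (p x - p y) := by
        field_simp; ring
      have hr : |p y / q y| ≤ b := by
        rw [abs_of_nonneg (div_nonneg (by linarith) hqy0.le)]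
        exact (div_le_self (by linarith) hqy.1).trans hpy.2
      have : |p y / q y * q x - p x| ≤ b * |q x - q y| + |p x - p y| := by
        rw [e]
        refine (abs_sub _ _).trans ?_
        rw [abs_mul]
        gcongr
      calc _ ≤ (b * |q x - q y| + |p x - p y|) * WW v x := by gcongr
        _ = b * (|q x - q y| * WW v x) + |p x - p y| * WW v x := by ring
        _ ≤ _ := by gcongr
    have hX1 : 1 ≤ (2 : ℝ) ^ (Cα * b) := Real.one_le_rpow (by norm_num) (by positivity)
    have b3 : L ^ p x ≤ (2 : ℝ) ^ (Cα * b) * (R ^ p x +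
        ((n : ℝ) + 2) ^ (n + 1) * ((2 : ℝ) ^ v)⁻¹ * ((1 + ‖x‖) ^ (n + 1))⁻¹) := by
      rw [hLdef]
      rcases max_cases ((2 : ℝ) ^ ((v : ℝ) * (α y + n / 2)) * ‖lam v m‖) (EE v m) with ⟨h, _⟩ | ⟨h, _⟩
      · rw [h]
        calc _ ≤ ((2 : ℝ) ^ Cα * R) ^ p x := Real.rpow_le_rpow (by positivity) hcm (by linarith)
          _ = (2 : ℝ) ^ (Cα * p x) * R ^ p x := by
            rw [Real.mul_rpow (by positivity) hR0, ← Real.rpow_mul two_pos.le]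
          _ ≤ (2 : ℝ) ^ (Cα * b) * R ^ p x := by
            gcongr
            · norm_num
            · exact hpx.2
          _ ≤ _ := by
            gcongr
            exact le_add_of_nonneg_right (by positivity)
      · rw [h]
        calc _ ≤ EE v m ^ (1 : ℝ) := Real.rpow_le_rpow_of_exponent_ge hEpos hE1 hpx.1
          _ = EE v m := Real.rpow_one _
          _ ≤ R ^ p x + ((n : ℝ) + 2) ^ (n + 1) * ((2 : ℝ) ^ v)⁻¹ * ((1 + ‖x‖) ^ (n + 1))⁻¹ := by
            have : 0 ≤ R ^ p x := by positivity
            linarith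
          _ ≤ _ := le_mul_of_one_le_left (by positivity) hX1
    calc _ ≤ (2 : ℝ) ^ (Ca * b) * (Real.exp (Kl * (b * Cq + Cp)) * L ^ p x) := by gcongr
      _ ≤ (2 : ℝ) ^ (Ca * b) * (Real.exp (Kl * (b * Cq + Cp)) * ((2 : ℝ) ^ (Cα * b) * (R ^ p x +
        ((n : ℝ) + 2) ^ (n + 1) * ((2 : ℝ) ^ v)⁻¹ * ((1 + ‖x‖) ^ (n + 1))⁻¹))) := by gcongr
      _ = _ := by rw [hK1]; ring
  refine main.trans ?_
  calc _ ≤ ENNReal.ofReal K1 * (1 + H) := by gcongr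
    _ = ENNReal.ofReal (K1 * (1 + H.toReal)) := by
      rw [ENNReal.ofReal_mul hK10, ENNReal.ofReal_add (by norm_num) ENNReal.toReal_nonneg,
        ENNReal.ofReal_toReal hHf, ENNReal.ofReal_one]
    _ ≤ _ := ENNReal.ofReal_le_ofReal (le_max_right _ _)

lemma osc_p (θ b x0 x1 y0 y1 px py : ℝ) (t0 : 0 < θ) (t1 : θ < 1)
    (hx0 : 1 ≤ x0) (hx1 : 1 ≤ x1) (hy0 : 1 ≤ y0) (hy1 : 1 ≤ y1)
    (hpx : 1 ≤ px ∧ px ≤ b) (hpy : 1 ≤ py ∧ py ≤ b)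
    (hx : 1 / px = (1 - θ) / x0 + θ / x1) (hy : 1 / py = (1 - θ) / y0 + θ / y1) :
    |px - py| ≤ b * b * (|x0 - y0| + |x1 - y1|) := by
  have aux : ∀ s t : ℝ, 1 ≤ s → 1 ≤ t → |1 / t - 1 / s| ≤ |s - t| := by
    intro s t hs ht
    have : 1 / t - 1 / s = (s - t) / (t * s) := by field_simp
    rw [this, abs_div]
    refine div_le_self (abs_nonneg _) ?_
    rw [abs_of_nonneg (by positivity)]
    nlinarith
  have e : px - py = px * py * (1 / py - 1 / px) := by
    have : px ≠ 0 := by linarith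
    have : py ≠ 0 := by linarith
    field_simp
  have e2 : 1 / py - 1 / px = (1 - θ) * (1 / y0 - 1 / x0) + θ * (1 / y1 - 1 / x1) := by
    rw [hx, hy]; ring
  have h0 := aux x0 y0 hx0 hy0
  have h1 := aux x1 y1 hx1 hy1
  have h2 : |1 / py - 1 / px| ≤ |x0 - y0| + |x1 - y1| := by
    rw [e2]
    refine (abs_add_le _ _).trans ?_
    rw [abs_mul, abs_mul, abs_of_pos t0, abs_of_pos (by linarith : 0 < 1 - θ)]
    refine add_le_add ?_ ?_
    · refine le_trans ?_ h0
      exact mul_le_of_le_one_left (abs_nonneg _) (by linarith)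
    · refine le_trans ?_ h1
      exact mul_le_of_le_one_left (abs_nonneg _) (by linarith)
  rw [e, abs_mul, abs_of_nonneg (mul_nonneg (by linarith) (by linarith) : 0 ≤ px * py)]
  have : 0 ≤ b := by linarith
  have : 0 ≤ py := by linarith
  exact mul_le_mul (mul_le_mul hpx.2 hpy.2 (by linarith) (by linarith)) h2 (abs_nonneg _) (by positivity)

lemma dir2 {n : ℕ} (θ : ℝ) (hθ : θ ∈ Set.Ioo (0 : ℝ) 1)
    (p₀ p₁ α₀ α₁ p α : En n → ℝ) (K : ℝ) (hK : 1 ≤ K)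
    (hp₀b : ∀ x, 1 ≤ p₀ x) (hp₁b : ∀ x, 1 ≤ p₁ x) (hpb : ∀ x, 1 ≤ p x)
    (hp : ∀ x, 1 / p x = (1 - θ) / p₀ x + θ / p₁ x)
    (hα : ∀ x, α x = (1 - θ) * α₀ x + θ * α₁ x)
    (h0 : ∀ lam : ℕ → (Fin n → ℤ) → ℂ, modu α p lam ≤ 1 →
      modu α₀ p₀ (fun v m => ((muS α p α₀ p₀ lam v m : ℝ) : ℂ)) ≤ ENNReal.ofReal K)
    (h1 : ∀ lam : ℕ → (Fin n → ℤ) → ℂ, modu α p lam ≤ 1 →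
      modu α₁ p₁ (fun v m => ((muS α p α₁ p₁ lam v m : ℝ) : ℂ)) ≤ ENNReal.ofReal K)
    (lam : ℕ → (Fin n → ℤ) → ℂ) :
      calderonNorm (seqNorm α₀ p₀ p₀) (seqNorm α₁ p₁ p₁) θ lam ≤
        ENNReal.ofReal K * seqNorm α p p lam := by
  obtain ⟨t0, t1⟩ := hθ
  have hK0 : 0 < K := by linarith
  have hKe : ENNReal.ofReal K ≠ 0 := by simpa using hK0
  rw [mul_comm, ← ENNReal.div_le_iff hKe ENNReal.ofReal_ne_top]
  refine ENNReal.le_of_forall_pos_le_add fun ε hε hM => ?_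
  set c : ℝ := (seqNorm α p p lam).toReal + ε with hc
  have hc0 : 0 < c := by positivity
  have hMc : seqNorm α p p lam + ε = ENNReal.ofReal c := by
    rw [hc, ENNReal.ofReal_add ENNReal.toReal_nonneg (NNReal.coe_nonneg ε), ENNReal.ofReal_toReal hM.ne]
    simp
  have hlt : seqNorm α p p lam < ENNReal.ofReal c := by
    rw [← hMc]
    exact ENNReal.lt_add_right hM.ne (by simpa using hε.ne')
  rw [hMc, ENNReal.div_le_iff hKe ENNReal.ofReal_ne_top, ← ENNReal.ofReal_mul hc0.le]
  have hm := modu_of_lt α p hpb lam c hc0 hlt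
  set lam' : ℕ → (Fin n → ℤ) → ℂ := fun v m => c⁻¹ • lam v m with hlam'
  have one : ENNReal.ofReal (1 : ℝ) = 1 := ENNReal.ofReal_one
  refine sInf_le ⟨fun v m => K⁻¹ • ((muS α p α₀ p₀ lam' v m : ℝ) : ℂ),
    fun v m => K⁻¹ • ((muS α p α₁ p₁ lam' v m : ℝ) : ℂ), ?_, ?_, fun v m => ?_⟩
  · rw [← one]
    refine seqNorm_le_of α₀ p₀ hp₀b _ 1 one_pos ?_
    simpa only [inv_one, one_smul] using modu_scale α₀ p₀ hp₀b _ K hK (h0 lam' hm)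
  · rw [← one]
    refine seqNorm_le_of α₁ p₁ hp₁b _ 1 one_pos ?_
    simpa only [inv_one, one_smul] using modu_scale α₁ p₁ hp₁b _ K hK (h1 lam' hm)
  · have n0 := muS_nonneg α p α₀ p₀ lam' v m
    have n1 := muS_nonneg α p α₁ p₁ lam' v m
    rw [norm_smul_aux K hK0, norm_smul_aux K hK0, Complex.norm_real, Complex.norm_real,
      Real.norm_eq_abs, Real.norm_eq_abs, abs_of_nonneg n0, abs_of_nonneg n1,
      ENNReal.ofReal_rpow_of_nonneg (by positivity) (by linarith),
      ENNReal.ofReal_rpow_of_nonneg (by positivity) t0.le, ← ENNReal.ofReal_mul (by positivity),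
      ← ENNReal.ofReal_mul (by positivity)]
    apply ENNReal.ofReal_le_ofReal
    rw [Real.mul_rpow (by positivity) n0, Real.mul_rpow (by positivity) n1]
    have e2 : K⁻¹ ^ (1 - θ) * K⁻¹ ^ θ = K⁻¹ := by
      rw [← Real.rpow_add (by positivity)]; simp
    have hLp := LL_pos α lam' v m
    have e3 : muS α p α₀ p₀ lam' v m ^ (1 - θ) * muS α p α₁ p₁ lam' v m ^ θ =
        (2 : ℝ) ^ (-((v : ℝ) * (α (yc v m) + n / 2))) * LL α lam' v m := by
      unfold muS
      set y : En n := yc v m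
      have hpy := hp y
      have g0 := hp₀b y
      have g1 := hp₁b y
      have g := hpb y
      rw [Real.mul_rpow (by positivity) (by positivity), Real.mul_rpow (by positivity) (by positivity),
        ← Real.rpow_mul two_pos.le, ← Real.rpow_mul two_pos.le, ← Real.rpow_mul hLp.le,
        ← Real.rpow_mul hLp.le, mul_mul_mul_comm, ← Real.rpow_add two_pos, ← Real.rpow_add hLp]
      have x1 : p y / p₀ y * (1 - θ) + p y / p₁ y * θ = 1 := by
        have : p y / p₀ y * (1 - θ) + p y / p₁ y * θ = p y * (1 / p y) := by rw [hpy]; ring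
        rw [this]
        have : p y ≠ 0 := by linarith
        field_simp
      rw [x1, Real.rpow_one, hα]
      congr 2; ring
    have e4 : c⁻¹ * ‖lam v m‖ ≤ (2 : ℝ) ^ (-((v : ℝ) * (α (yc v m) + n / 2))) * LL α lam' v m := by
      rw [Real.rpow_neg two_pos.le, ← div_eq_inv_mul _ ((2 : ℝ) ^ _), le_div_iff₀ (by positivity), mul_comm,
        ← norm_smul_aux c hc0]
      exact le_max_left _ _
    calc ‖lam v m‖ = c * (c⁻¹ * ‖lam v m‖) := by field_simp
      _ ≤ c * (muS α p α₀ p₀ lam' v m ^ (1 - θ) * muS α p α₁ p₁ lam' v m ^ θ) := by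
        rw [e3]; gcongr
      _ = c * (K * (K⁻¹ ^ (1 - θ) * K⁻¹ ^ θ)) *
          (muS α p α₀ p₀ lam' v m ^ (1 - θ) * muS α p α₁ p₁ lam' v m ^ θ) := by
        rw [e2, mul_inv_cancel₀ hK0.ne', mul_one]
      _ = _ := by ring

/-- Theorem `calderon-prod1`: the Calderón product
`(f^{α₀(·)}_{p₀(·),p₀(·)})^{1−θ}·(f^{α₁(·)}_{p₁(·),p₁(·)})^θ = f^{α(·)}_{p(·),p(·)}`
with equivalent norms. -/
theorem stmt8 {n : ℕ} (θ : ℝ) (hθ : θ ∈ Set.Ioo (0 : ℝ) 1)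
    (p₀ p₁ α₀ α₁ p α : En n → ℝ)
    (hp₀ : ∃ c, GlobLogHolder c p₀) (hp₁ : ∃ c, GlobLogHolder c p₁)
    (hp₀b : ∃ b : ℝ, ∀ x, 1 ≤ p₀ x ∧ p₀ x ≤ b)
    (hp₁b : ∃ b : ℝ, ∀ x, 1 ≤ p₁ x ∧ p₁ x ≤ b)
    (hα₀ : ∃ c, LocLogHolder c α₀) (hα₁ : ∃ c, LocLogHolder c α₁)
    (hp : ∀ x, 1 / p x = (1 - θ) / p₀ x + θ / p₁ x)
    (hα : ∀ x, α x = (1 - θ) * α₀ x + θ * α₁ x) :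
    ∃ c₁ c₂ : ℝ, 0 < c₁ ∧ 0 < c₂ ∧ ∀ lam : ℕ → (Fin n → ℤ) → ℂ,
      ENNReal.ofReal c₁ * seqNorm α p p lam ≤
          calderonNorm (seqNorm α₀ p₀ p₀) (seqNorm α₁ p₁ p₁) θ lam ∧
        calderonNorm (seqNorm α₀ p₀ p₀) (seqNorm α₁ p₁ p₁) θ lam ≤
          ENNReal.ofReal c₂ * seqNorm α p p lam := by

  obtain ⟨c0, g0⟩ := hp₀
  obtain ⟨c1, g1⟩ := hp₁
  obtain ⟨b0, hb0⟩ := hp₀b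
  obtain ⟨b1, hb1⟩ := hp₁b
  obtain ⟨d0, l0⟩ := hα₀
  obtain ⟨d1, l1⟩ := hα₁
  have q0 : ∀ x, 1 ≤ p₀ x ∧ p₀ x ≤ max b0 b1 := fun x =>
    ⟨(hb0 x).1, (hb0 x).2.trans (le_max_left _ _)⟩
  have q1 : ∀ x, 1 ≤ p₁ x ∧ p₁ x ≤ max b0 b1 := fun x =>
    ⟨(hb1 x).1, (hb1 x).2.trans (le_max_right _ _)⟩
  set b := max b0 b1
  have q : ∀ x, 1 ≤ p x ∧ p x ≤ b := fun x =>
    p_bds θ (p x) (p₀ x) (p₁ x) b hθ.1 hθ.2 (q0 x).1 (q1 x).1 (q0 x).2 (q1 x).2 (hp x)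
  obtain ⟨C0, hC0, o0⟩ := osc_glob g0
  obtain ⟨C1, hC1, o1⟩ := osc_glob g1
  obtain ⟨A0, hA0, r0⟩ := osc_loc l0
  obtain ⟨A1, hA1, r1⟩ := osc_loc l1
  have r : ∀ (v : ℕ) (x : En n), |α x - α (yc v (mm v x))| * (1 + v) ≤ A0 + A1 := by
    intro v x
    have h0 := r0 v x
    have h1 := r1 v x
    have ht := hθ.1
    have ht' := hθ.2
    have e : α x - α (yc v (mm v x)) = (1 - θ) * (α₀ x - α₀ (yc v (mm v x))) +
        θ * (α₁ x - α₁ (yc v (mm v x))) := by rw [hα, hα]; ring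
    have h2 : |α x - α (yc v (mm v x))| ≤ |α₀ x - α₀ (yc v (mm v x))| +
        |α₁ x - α₁ (yc v (mm v x))| := by
      rw [e]
      refine (abs_add_le _ _).trans ?_
      rw [abs_mul, abs_mul, abs_of_pos ht, abs_of_pos (by linarith : 0 < 1 - θ)]
      exact add_le_add (mul_le_of_le_one_left (abs_nonneg _) (by linarith))
        (mul_le_of_le_one_left (abs_nonneg _) (by linarith))
    have h3 := mul_le_mul_of_nonneg_right h2 (by positivity : 0 ≤ 1 + (v : ℝ))
    linarith
  have o : ∀ (v : ℕ) (x : En n), |p x - p (yc v (mm v x))| * WW v x ≤ b * b * (C0 + C1) := by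
    intro v x
    have h0 := o0 v x
    have h1 := o1 v x
    set y := yc v (mm v x)
    have h2 := osc_p θ b (p₀ x) (p₁ x) (p₀ y) (p₁ y) (p x) (p y) hθ.1 hθ.2 (q0 x).1 (q1 x).1
      (q0 y).1 (q1 y).1 (q x) (q y) (hp x) (hp y)
    have hW0 : 0 ≤ WW v x := by
      have := one_le_log ‖x‖ (norm_nonneg _)
      unfold WW; positivity
    have hb : 0 ≤ b * b := mul_self_nonneg b
    calc _ ≤ b * b * (|p₀ x - p₀ y| + |p₁ x - p₁ y|) * WW v x := by gcongr
      _ = b * b * (|p₀ x - p₀ y| * WW v x + |p₁ x - p₁ y| * WW v x) := by ring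
      _ ≤ _ := by gcongr
  obtain ⟨K0, hK0, k0⟩ := core α p α₀ p₀ b A0 (A0 + A1) (b * b * (C0 + C1)) C0 q q0 (by positivity)
    hA0 r0 r o o0
  obtain ⟨K1, hK1, k1⟩ := core α p α₁ p₁ b A1 (A0 + A1) (b * b * (C0 + C1)) C1 q q1 (by positivity)
    hA1 r1 r o o1
  refine ⟨1 / 4, max K0 K1, by norm_num, by positivity, fun lam => ⟨?_, ?_⟩⟩
  · exact dir1 θ hθ p₀ p₁ α₀ α₁ p α (meas_of_loc g0.1) (meas_of_loc l0) (fun x => (q0 x).1)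
      (fun x => (q1 x).1) (fun x => (q x).1) hp hα lam
  · exact dir2 θ hθ p₀ p₁ α₀ α₁ p α (max K0 K1) (hK0.trans (le_max_left _ _)) (fun x => (q0 x).1)
      (fun x => (q1 x).1) (fun x => (q x).1) hp hα
      (fun lam h => (k0 lam h).trans (ENNReal.ofReal_le_ofReal (le_max_left _ _)))
      (fun lam h => (k1 lam h).trans (ENNReal.ofReal_le_ofReal (le_max_right _ _))) lam
end
end
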